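/- (Theorem 1, missing-data and propensity-score models correct.) Fix d in {(1,1),(0,1),(1,0)} and d' = (0,0). Suppose Assumption DID holds for d and for d', Assumption MAR holds, P(D = d | X) > 0 and P(D = d' | X) > 0 a.s., all four Hájek-weight denominators are finite and strictly positive, and all expectations defining τ^R_{dd'} are finite. If, a.s., φ_{d2}(X) = q_{d2}(X) and φ_0(X) = q_0(X), and π_{d1|d2}(X) = p_{d1|d2}(X), π_{d2}(X) = p_{d2}(X), π_{0|0}(X) = p_{0|0}(X), π_0(X) = p_0(X) (so that π_d = p_d and π_{d'} = p_{d'}), while μ_d and μ_{d'} are arbitrary measurable functions of X with μ_d(X), μ_{d'}(X) integrable, then τ^R_{dd'} = τ_{dd'}. -/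

import Mathlib

open MeasureTheory Set
open scoped Classical

noncomputable section

namespace DIDMissing

variable {Ω : Type*} {𝓧 : Type*}

/-- Real-valued indicator of a set. -/
def ind (A : Set Ω) : Ω → ℝ := A.indicator fun _ => (1 : ℝ)

/-- All treatment paths `{0,1}²` (coded as reals). -/
def allPaths : Set (ℝ × ℝ) := {(0, 0), (0, 1), (1, 0), (1, 1)}

/-- The three treated paths `{(1,1), (0,1), (1,0)}`. -/
def threePaths : Set (ℝ × ℝ) := {(1, 1), (0, 1), (1, 0)}

/-- The event `{D = d}` for a treatment path `d = (d₁, d₂)`. -/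
def evD (D1 D2 : Ω → ℝ) (d : ℝ × ℝ) : Set Ω := {ω | D1 ω = d.1 ∧ D2 ω = d.2}

/-- The event `{D₂ = b}`. -/
def evD2 (D2 : Ω → ℝ) (b : ℝ) : Set Ω := {ω | D2 ω = b}

/-- `g` is a (measurable-in-the-covariate) version of the conditional mean `E[Z ∣ A, X]`:
for every bounded measurable `h`, `E[1_A · Z · h(X)] = E[1_A · g(X) · h(X)]`. -/
def IsCondMeanGiven [MeasurableSpace Ω] [MeasurableSpace 𝓧] (P : Measure Ω) (X : Ω → 𝓧)
    (A : Set Ω) (Z : Ω → ℝ) (g : 𝓧 → ℝ) : Prop :=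
  Measurable g ∧
    ∀ h : 𝓧 → ℝ, Measurable h → (∃ C, ∀ x, |h x| ≤ C) →
      ∫ ω, ind A ω * Z ω * h (X ω) ∂P = ∫ ω, ind A ω * g (X ω) * h (X ω) ∂P

/-- Assumption DID for a path `d` relative to `d' = (0,0)`:
(i) no anticipation, `E[Y₀(d) ∣ D = d, X] = E[Y₀(0,0) ∣ D = d, X]` a.s., stated in the
version-free integral form; and (ii) conditional parallel trends, stated as the existence
of a common version of `E[Y₂(0,0) − Y₀(0,0) ∣ X]` and `E[Y₂(0,0) − Y₀(0,0) ∣ D = d, X]`. -/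
def DID [MeasurableSpace Ω] [MeasurableSpace 𝓧] (P : Measure Ω) (X : Ω → 𝓧)
    (D1 D2 : Ω → ℝ) (Y0p Y2p : ℝ × ℝ → Ω → ℝ) (d : ℝ × ℝ) : Prop :=
  (∀ h : 𝓧 → ℝ, Measurable h → (∃ C, ∀ x, |h x| ≤ C) →
      ∫ ω, ind (evD D1 D2 d) ω * Y0p d ω * h (X ω) ∂P
        = ∫ ω, ind (evD D1 D2 d) ω * Y0p (0, 0) ω * h (X ω) ∂P) ∧
  (∃ tr : 𝓧 → ℝ,
      IsCondMeanGiven P X Set.univ (fun ω => Y2p (0, 0) ω - Y0p (0, 0) ω) tr ∧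
      IsCondMeanGiven P X (evD D1 D2 d) (fun ω => Y2p (0, 0) ω - Y0p (0, 0) ω) tr)

/-- Assumption MAR: `S ⟂ (D₁, ΔY) ∣ (D₂, X)`, where `q d₂` is a version of the
missing-data probability `P(S = 1 ∣ D₂ = d₂, X)`, which is `(0,1]`-valued a.s. -/
def MAR [MeasurableSpace Ω] [MeasurableSpace 𝓧] (P : Measure Ω) (X : Ω → 𝓧)
    (D1 D2 S Y0 Y2 : Ω → ℝ) (q : ℝ → 𝓧 → ℝ) : Prop :=
  (∀ d2 ∈ ({0, 1} : Set ℝ), IsCondMeanGiven P X (evD2 D2 d2) S (q d2)) ∧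
  (∀ d2 ∈ ({0, 1} : Set ℝ), ∀ᵐ ω ∂P, 0 < q d2 (X ω) ∧ q d2 (X ω) ≤ 1) ∧
  (∀ d2 ∈ ({0, 1} : Set ℝ), ∀ f : ℝ × ℝ → ℝ, Measurable f → (∃ C, ∀ p, |f p| ≤ C) →
      ∀ h : 𝓧 → ℝ, Measurable h → (∃ C, ∀ x, |h x| ≤ C) →
        ∫ ω, ind (evD2 D2 d2) ω * S ω * f (D1 ω, Y2 ω - Y0 ω) * h (X ω) ∂P
          = ∫ ω, ind (evD2 D2 d2) ω * q d2 (X ω) * f (D1 ω, Y2 ω - Y0 ω) * h (X ω) ∂P)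

/-- The path-dependent ATT `τ_{d,(0,0)} = E[Y₂(d) − Y₂(0,0) ∣ D = d]`. -/
def tau [MeasurableSpace Ω] (P : Measure Ω) (D1 D2 : Ω → ℝ)
    (Y2p : ℝ × ℝ → Ω → ℝ) (d : ℝ × ℝ) : ℝ :=
  (P (evD D1 D2 d)).toReal⁻¹ * ∫ ω in evD D1 D2 d, (Y2p d ω - Y2p (0, 0) ω) ∂P

/-- Numerator of the Hájek weight `w₁`. -/
def n1 (X : Ω → 𝓧) (D1 D2 S : Ω → ℝ) (φ2 : 𝓧 → ℝ) (d : ℝ × ℝ) : Ω → ℝ :=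
  fun ω => S ω / φ2 (X ω) * ind (evD D1 D2 d) ω

/-- Numerator of the Hájek weight `w₂`. -/
def n2 (X : Ω → 𝓧) (D1 D2 S : Ω → ℝ) (φ0 πc πc' π2 π0 : 𝓧 → ℝ) : Ω → ℝ :=
  fun ω => S ω / φ0 (X ω) * (πc (X ω) * π2 (X ω) / (πc' (X ω) * π0 (X ω)))
    * ind (evD D1 D2 (0, 0)) ω

/-- Numerator of the Hájek weight `w₃`. -/
def n3 (X : Ω → 𝓧) (D2 : Ω → ℝ) (πc : 𝓧 → ℝ) (d2 : ℝ) : Ω → ℝ :=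
  fun ω => πc (X ω) * ind (evD2 D2 d2) ω

/-- Numerator of the Hájek weight `w₄`. -/
def n4 (X : Ω → 𝓧) (D2 S : Ω → ℝ) (φ2 πc : 𝓧 → ℝ) (d2 : ℝ) : Ω → ℝ :=
  fun ω => S ω / φ2 (X ω) * πc (X ω) * ind (evD2 D2 d2) ω

/-- The robust estimand `τ^R_{d,(0,0)}`. -/
def tauR [MeasurableSpace Ω] (P : Measure Ω) (X : Ω → 𝓧) (D1 D2 S Y0 Y2 : Ω → ℝ)
    (d : ℝ × ℝ) (μd μd' πc πc' π2 π0 φ2 φ0 : 𝓧 → ℝ) : ℝ :=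
  (∫ ω, (n1 X D1 D2 S φ2 d ω / ∫ ω', n1 X D1 D2 S φ2 d ω' ∂P
        - n2 X D1 D2 S φ0 πc πc' π2 π0 ω / ∫ ω', n2 X D1 D2 S φ0 πc πc' π2 π0 ω' ∂P)
      * (Y2 ω - Y0 ω - μd' (X ω)) ∂P)
  + ∫ ω, (n3 X D2 πc d.2 ω / ∫ ω', n3 X D2 πc d.2 ω' ∂P
        - n4 X D2 S φ2 πc d.2 ω / ∫ ω', n4 X D2 S φ2 πc d.2 ω' ∂P)
      * (μd (X ω) - μd' (X ω)) ∂P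

/-!
Reweighting is treated at the level of laws: two weights are equivalent over `W` when they give `W`
the same weighted law. Two equivalences carry the whole argument. Over `(D₁, ΔY, X)`, missingness at
random makes `1{D₂ = b} S / q_b(X)` equivalent to `1{D₂ = b}`, so every Hájek numerator can be
replaced by its counterpart without `S`; in particular `w₃` and `w₄` become equivalent and the
augmentation term vanishes for every choice of outcome models. Over `X`, correct propensity scores
make `1{D = (0,0)} π_d(X) / π_{d'}(X)` equivalent to `1{D = d}`. With `g` the common trend,
`E[ΔY ∣ D = (0,0), X] = g(X)`, so the weighted contrast is `E[ΔY − μ_{d'}(X) ∣ D = d]` minus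
`E[g(X) − μ_{d'}(X) ∣ D = d]`; the model `μ_{d'}` cancels, and parallel trends for `d` turn what is
left into the treatment effect.
-/

section WeightEquiv

variable {E G : Type*} [MeasurableSpace Ω] [MeasurableSpace E] [MeasurableSpace G]
  {μ : Measure Ω} {W : Ω → E} {V : Ω → G} {a a' b b' c : Ω → ℝ}

/-- Two nonnegative weights `a` and `b` are equivalent over `W` if the weighted measures `a • μ` and
`b • μ` give `W` the same law. A change of weights (inverse probability weighting, reweighting one
group to another) is an instance of this. For integrable weights it says `E[a ∣ W] = E[b ∣ W]`, but
it is stated on laws so that it transfers integrability of unbounded functions of `W` as well. -/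
structure WeightEquiv (μ : Measure Ω) (W : Ω → E) (a b : Ω → ℝ) : Prop where
  aemeasurable_left : AEMeasurable a μ
  aemeasurable_right : AEMeasurable b μ
  nonneg_left : 0 ≤ᵐ[μ] a
  nonneg_right : 0 ≤ᵐ[μ] b
  map_eq : (μ.withDensity fun ω => ENNReal.ofReal (a ω)).map W =
    (μ.withDensity fun ω => ENNReal.ofReal (b ω)).map W

theorem integrable_map_withDensity_ofReal_iff (hW : Measurable W) (ha : AEMeasurable a μ)
    (ha0 : 0 ≤ᵐ[μ] a) {F : E → ℝ} (hF : Measurable F) :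
    Integrable F ((μ.withDensity fun ω => ENNReal.ofReal (a ω)).map W) ↔
      Integrable (fun ω => a ω * F (W ω)) μ := by
  rw [integrable_map_measure hF.aestronglyMeasurable hW.aemeasurable,
    integrable_withDensity_iff_integrable_smul₀' ha.ennreal_ofReal (by simp)]
  refine integrable_congr ?_
  filter_upwards [ha0] with ω hω
  simp [ENNReal.toReal_ofReal hω]

theorem integral_map_withDensity_ofReal (hW : Measurable W) (ha : AEMeasurable a μ)
    (ha0 : 0 ≤ᵐ[μ] a) {F : E → ℝ} (hF : Measurable F) :
    ∫ x, F x ∂(μ.withDensity fun ω => ENNReal.ofReal (a ω)).map W = ∫ ω, a ω * F (W ω) ∂μ := by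
  rw [integral_map hW.aemeasurable hF.aestronglyMeasurable,
    integral_withDensity_eq_integral_toReal_smul₀ ha.ennreal_ofReal (by simp)]
  refine integral_congr_ae ?_
  filter_upwards [ha0] with ω hω
  simp [ENNReal.toReal_ofReal hω]

theorem map_withDensity_ofReal_mul_comp (hW : Measurable W) (ha : AEMeasurable a μ)
    (ha0 : 0 ≤ᵐ[μ] a) {f : E → ℝ} (hf : Measurable f) :
    (μ.withDensity fun ω => ENNReal.ofReal (a ω * f (W ω))).map W =
      ((μ.withDensity fun ω => ENNReal.ofReal (a ω)).map W).withDensity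
        fun x => ENNReal.ofReal (f x) := by
  have hmul : (fun ω => ENNReal.ofReal (a ω * f (W ω))) =ᵐ[μ]
      (fun ω => ENNReal.ofReal (a ω)) * fun ω => ENNReal.ofReal (f (W ω)) := by
    filter_upwards [ha0] with ω hω using ENNReal.ofReal_mul hω
  have hfW : AEMeasurable (fun ω => ENNReal.ofReal (f (W ω))) μ :=
    (hf.ennreal_ofReal.comp hW).aemeasurable
  rw [withDensity_congr_ae hmul, withDensity_mul₀ ha.ennreal_ofReal hfW]
  ext B hB
  rw [Measure.map_apply hW hB, withDensity_apply _ (hW hB), withDensity_apply _ hB,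
    setLIntegral_map hB hf.ennreal_ofReal hW]

theorem map_withDensity_ofReal_apply (hW : Measurable W) (ha : Integrable a μ) (ha0 : 0 ≤ᵐ[μ] a)
    {B : Set E} (hB : MeasurableSet B) :
    (μ.withDensity fun ω => ENNReal.ofReal (a ω)).map W B =
      ENNReal.ofReal (∫ ω in W ⁻¹' B, a ω ∂μ) := by
  rw [Measure.map_apply hW hB, withDensity_apply _ (hW hB),
    ofReal_integral_eq_lintegral_ofReal ha.integrableOn (ae_restrict_of_ae ha0)]

namespace WeightEquiv

theorem symm (h : WeightEquiv μ W a b) : WeightEquiv μ W b a :=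
  ⟨h.aemeasurable_right, h.aemeasurable_left, h.nonneg_right, h.nonneg_left, h.map_eq.symm⟩

theorem trans (hab : WeightEquiv μ W a b) (hbc : WeightEquiv μ W b c) : WeightEquiv μ W a c :=
  ⟨hab.aemeasurable_left, hbc.aemeasurable_right, hab.nonneg_left, hbc.nonneg_right,
    hab.map_eq.trans hbc.map_eq⟩

theorem congr_right (h : WeightEquiv μ W a b) (hbc : b =ᵐ[μ] c) : WeightEquiv μ W a c where
  aemeasurable_left := h.aemeasurable_left
  aemeasurable_right := h.aemeasurable_right.congr hbc
  nonneg_left := h.nonneg_left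
  nonneg_right := h.nonneg_right.trans_eq hbc
  map_eq := by
    have hbc' : (fun ω => ENNReal.ofReal (b ω)) =ᵐ[μ] fun ω => ENNReal.ofReal (c ω) :=
      hbc.fun_comp ENNReal.ofReal
    rw [h.map_eq, withDensity_congr_ae hbc']

theorem of_setIntegral_eq (hW : Measurable W) (ha : Integrable a μ) (hb : Integrable b μ)
    (ha0 : 0 ≤ᵐ[μ] a) (hb0 : 0 ≤ᵐ[μ] b)
    (h : ∀ B, MeasurableSet B → ∫ ω in W ⁻¹' B, a ω ∂μ = ∫ ω in W ⁻¹' B, b ω ∂μ) :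
    WeightEquiv μ W a b := by
  refine ⟨ha.aemeasurable, hb.aemeasurable, ha0, hb0, Measure.ext fun B hB => ?_⟩
  rw [map_withDensity_ofReal_apply hW ha ha0 hB, map_withDensity_ofReal_apply hW hb hb0 hB, h B hB]

theorem prodMk_of_setIntegral_eq (hW : Measurable W) (hV : Measurable V) (ha : Integrable a μ)
    (hb : Integrable b μ) (ha0 : 0 ≤ᵐ[μ] a) (hb0 : 0 ≤ᵐ[μ] b)
    (h : ∀ B C, MeasurableSet B → MeasurableSet C →
      ∫ ω in W ⁻¹' B ∩ V ⁻¹' C, a ω ∂μ = ∫ ω in W ⁻¹' B ∩ V ⁻¹' C, b ω ∂μ) :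
    WeightEquiv μ (fun ω => (W ω, V ω)) a b := by
  have hWV : Measurable fun ω => (W ω, V ω) := hW.prodMk hV
  have : IsFiniteMeasure (μ.withDensity fun ω => ENNReal.ofReal (a ω)) :=
    isFiniteMeasure_withDensity_ofReal ha.2
  refine ⟨ha.aemeasurable, hb.aemeasurable, ha0, hb0, Measure.ext_prod fun {B C} hB hC => ?_⟩
  rw [map_withDensity_ofReal_apply hWV ha ha0 (hB.prod hC),
    map_withDensity_ofReal_apply hWV hb hb0 (hB.prod hC), mk_preimage_prod, h B C hB hC]

theorem mul_comp (h : WeightEquiv μ W a b) (hW : Measurable W) {f : E → ℝ} (hf : Measurable f)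
    (hf0 : ∀ x, 0 ≤ f x) : WeightEquiv μ W (fun ω => a ω * f (W ω)) fun ω => b ω * f (W ω) where
  aemeasurable_left := h.aemeasurable_left.mul (hf.comp hW).aemeasurable
  aemeasurable_right := h.aemeasurable_right.mul (hf.comp hW).aemeasurable
  nonneg_left := by filter_upwards [h.nonneg_left] with ω hω using mul_nonneg hω (hf0 _)
  nonneg_right := by filter_upwards [h.nonneg_right] with ω hω using mul_nonneg hω (hf0 _)
  map_eq := by
    rw [map_withDensity_ofReal_mul_comp hW h.aemeasurable_left h.nonneg_left hf,
      map_withDensity_ofReal_mul_comp hW h.aemeasurable_right h.nonneg_right hf, h.map_eq]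

theorem integrable_mul_comp_iff (h : WeightEquiv μ W a b) (hW : Measurable W) {F : E → ℝ}
    (hF : Measurable F) :
    Integrable (fun ω => a ω * F (W ω)) μ ↔ Integrable (fun ω => b ω * F (W ω)) μ := by
  rw [← integrable_map_withDensity_ofReal_iff hW h.aemeasurable_left h.nonneg_left hF, h.map_eq,
    integrable_map_withDensity_ofReal_iff hW h.aemeasurable_right h.nonneg_right hF]

theorem integral_mul_comp_eq (h : WeightEquiv μ W a b) (hW : Measurable W) {F : E → ℝ}
    (hF : Measurable F) : ∫ ω, a ω * F (W ω) ∂μ = ∫ ω, b ω * F (W ω) ∂μ := by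
  rw [← integral_map_withDensity_ofReal hW h.aemeasurable_left h.nonneg_left hF, h.map_eq,
    integral_map_withDensity_ofReal hW h.aemeasurable_right h.nonneg_right hF]

theorem integral_eq (h : WeightEquiv μ W a b) (hW : Measurable W) :
    ∫ ω, a ω ∂μ = ∫ ω, b ω ∂μ := by
  simpa only [mul_one] using h.integral_mul_comp_eq hW (measurable_const (a := (1 : ℝ)))

theorem integral_hajek_sub (ha : WeightEquiv μ W a a') (hb : WeightEquiv μ W b b')
    (hW : Measurable W) {F : E → ℝ} (hF : Measurable F) (hab : ∫ ω, a' ω ∂μ = ∫ ω, b' ω ∂μ)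
    (haF : Integrable (fun ω => a' ω * F (W ω)) μ) (hbF : Integrable (fun ω => b' ω * F (W ω)) μ) :
    ∫ ω, (a ω / ∫ ω', a ω' ∂μ - b ω / ∫ ω', b ω' ∂μ) * F (W ω) ∂μ =
      (∫ ω, a' ω ∂μ)⁻¹ * (∫ ω, a' ω * F (W ω) ∂μ - ∫ ω, b' ω * F (W ω) ∂μ) := by
  rw [ha.integral_eq hW, hb.integral_eq hW, ← hab, ← ha.integral_mul_comp_eq hW hF,
    ← hb.integral_mul_comp_eq hW hF, ← integral_sub ((ha.integrable_mul_comp_iff hW hF).2 haF)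
      ((hb.integrable_mul_comp_iff hW hF).2 hbF), ← integral_const_mul]
  exact integral_congr_ae (.of_forall fun ω => by ring)

theorem integrable_mul_comp_of_hajek_sub (ha : WeightEquiv μ W a a') (hb : WeightEquiv μ W b b')
    (hW : Measurable W) {F : E → ℝ} (hF : Measurable F) (hb0 : ∫ ω, b' ω ∂μ ≠ 0)
    (haF : Integrable (fun ω => a' ω * F (W ω)) μ)
    (hint : Integrable
      (fun ω => (a ω / ∫ ω', a ω' ∂μ - b ω / ∫ ω', b ω' ∂μ) * F (W ω)) μ) :
    Integrable (fun ω => b' ω * F (W ω)) μ := by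
  rw [hb.integral_eq hW] at hint
  have haF' := ((ha.integrable_mul_comp_iff hW hF).2 haF).div_const (∫ ω, a ω ∂μ)
  refine (hb.integrable_mul_comp_iff hW hF).1
    (((haF'.sub hint).const_mul (∫ ω, b' ω ∂μ)).congr (.of_forall fun ω => ?_))
  simp only [Pi.sub_apply]
  field_simp
  ring

end WeightEquiv

end WeightEquiv

section Indicator

theorem ind_mul (A : Set Ω) (f : Ω → ℝ) : (fun ω => ind A ω * f ω) = A.indicator f := by
  ext ω
  by_cases h : ω ∈ A <;> simp [ind, h]

theorem ind_nonneg (A : Set Ω) (ω : Ω) : 0 ≤ ind A ω :=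
  indicator_nonneg (fun _ _ => zero_le_one) ω

theorem abs_ind_le_one (A : Set Ω) (ω : Ω) : |ind A ω| ≤ 1 := by
  rw [abs_of_nonneg (ind_nonneg A ω)]
  exact indicator_le_self' (fun _ _ => zero_le_one) ω

variable [MeasurableSpace Ω] {μ : Measure Ω} {A : Set Ω}

theorem measurable_ind (hA : MeasurableSet A) : Measurable (ind A) :=
  measurable_const.indicator hA

theorem integral_ind_mul (hA : MeasurableSet A) (f : Ω → ℝ) :
    ∫ ω, ind A ω * f ω ∂μ = ∫ ω in A, f ω ∂μ := by
  rw [ind_mul, integral_indicator hA]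

theorem integrable_ind_mul_iff (hA : MeasurableSet A) {f : Ω → ℝ} :
    Integrable (fun ω => ind A ω * f ω) μ ↔ IntegrableOn f A μ := by
  rw [ind_mul, integrable_indicator_iff hA]

theorem integrable_ind [IsFiniteMeasure μ] (hA : MeasurableSet A) : Integrable (ind A) μ :=
  (integrable_const (1 : ℝ)).indicator hA

end Indicator

namespace IsCondMeanGiven

variable [MeasurableSpace Ω] [m𝓧 : MeasurableSpace 𝓧] {P : Measure Ω} {X : Ω → 𝓧} {A : Set Ω}
  {Z Z' : Ω → ℝ} {g g' : 𝓧 → ℝ}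

theorem congr (h : IsCondMeanGiven P X A Z g) (hZ : EqOn Z Z' A) : IsCondMeanGiven P X A Z' g := by
  refine ⟨h.1, fun k hk hkb => ?_⟩
  have hind : (fun ω => ind A ω * Z ω) = fun ω => ind A ω * Z' ω := by
    rw [ind_mul, ind_mul, indicator_congr hZ]
  simp only [← congrFun hind, h.2 k hk hkb]

theorem setIntegral_eq (h : IsCondMeanGiven P X A Z g) (hX : Measurable X) (hA : MeasurableSet A)
    {B : Set 𝓧} (hB : MeasurableSet B) :
    ∫ ω in X ⁻¹' B, Z ω ∂P.restrict A = ∫ ω in X ⁻¹' B, g (X ω) ∂P.restrict A := by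
  have hind (f : Ω → ℝ) :
      ∫ ω, ind A ω * f ω * ind B (X ω) ∂P = ∫ ω in X ⁻¹' B, f ω ∂P.restrict A := by
    rw [← integral_ind_mul (hX hB), ← integral_ind_mul hA]
    exact integral_congr_ae (.of_forall fun ω => by simp only [ind, indicator, mem_preimage]; ring)
  rw [← hind, ← hind]
  exact h.2 (ind B) (measurable_ind hB) ⟨1, abs_ind_le_one B⟩

variable [IsFiniteMeasure P]

-- `IsCondMeanGiven` does not include integrability of `g ∘ X`, so `g` is first truncated.
theorem ae_eq_condExp (h : IsCondMeanGiven P X A Z g) (hX : Measurable X) (hA : MeasurableSet A)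
    (hZ : IntegrableOn Z A P) :
    (fun ω => g (X ω)) =ᵐ[P.restrict A] (P.restrict A)[Z | m𝓧.comap X] := by
  have htrunc (n : ℕ) : ∀ᵐ ω ∂P.restrict A,
      |g (X ω)| ≤ n → g (X ω) = ((P.restrict A)[Z | m𝓧.comap X]) ω := by
    let B : Set 𝓧 := {x | |g x| ≤ n}
    have hB : MeasurableSet B := measurableSet_le h.1.abs measurable_const
    have hXB : MeasurableSet[m𝓧.comap X] (X ⁻¹' B) := ⟨B, hB, rfl⟩
    have hgB : Measurable[m𝓧.comap X] ((X ⁻¹' B).indicator fun ω => g (X ω)) :=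
      (h.1.comp (comap_measurable X)).indicator hXB
    have hgB_int : Integrable ((X ⁻¹' B).indicator fun ω => g (X ω)) (P.restrict A) := by
      refine .of_bound (hgB.mono hX.comap_le le_rfl).aestronglyMeasurable n (.of_forall fun ω => ?_)
      by_cases hω : ω ∈ X ⁻¹' B
      · rw [indicator_of_mem hω]
        exact hω
      · simp [hω]
    have heq := (ae_eq_condExp_of_forall_setIntegral_eq hX.comap_le (hZ.indicator (hX hB))
      (fun s _ _ => hgB_int.integrableOn) (fun s ⟨C, hC, hs⟩ _ => by
        rw [← hs, setIntegral_indicator (hX hB), setIntegral_indicator (hX hB), ← preimage_inter,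
          h.setIntegral_eq hX hA (hC.inter hB)])
      hgB.stronglyMeasurable.aestronglyMeasurable).trans (condExp_indicator hZ hXB)
    filter_upwards [heq] with ω hω hωB
    have hmem : ω ∈ X ⁻¹' B := hωB
    simpa only [indicator_of_mem hmem] using hω
  filter_upwards [ae_all_iff.2 htrunc] with ω hω
  obtain ⟨n, hn⟩ := exists_nat_ge |g (X ω)|
  exact hω n hn

theorem ae_eq (h : IsCondMeanGiven P X A Z g) (h' : IsCondMeanGiven P X A Z g')
    (hX : Measurable X) (hA : MeasurableSet A) (hZ : IntegrableOn Z A P) :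
    (fun ω => g (X ω)) =ᵐ[P.restrict A] fun ω => g' (X ω) :=
  (h.ae_eq_condExp hX hA hZ).trans (h'.ae_eq_condExp hX hA hZ).symm

theorem integrableOn_comp (h : IsCondMeanGiven P X A Z g) (hX : Measurable X)
    (hA : MeasurableSet A) (hZ : IntegrableOn Z A P) : IntegrableOn (fun ω => g (X ω)) A P :=
  integrable_condExp.congr (h.ae_eq_condExp hX hA hZ).symm

theorem weightEquiv (h : IsCondMeanGiven P X A Z g) (hX : Measurable X) (hA : MeasurableSet A)
    (hZ : IntegrableOn Z A P) (hZ0 : 0 ≤ᵐ[P.restrict A] Z) :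
    WeightEquiv P X (fun ω => ind A ω * Z ω) fun ω => ind A ω * g (X ω) := by
  have hnonneg {f : Ω → ℝ} (hf : 0 ≤ᵐ[P.restrict A] f) : 0 ≤ᵐ[P] fun ω => ind A ω * f ω := by
    filter_upwards [(ae_restrict_iff' hA).1 hf] with ω hω
    by_cases hωA : ω ∈ A
    · exact mul_nonneg (ind_nonneg A ω) (hω hωA)
    · simp [ind, hωA]
  refine .of_setIntegral_eq hX ((integrable_ind_mul_iff hA).2 hZ)
    ((integrable_ind_mul_iff hA).2 (h.integrableOn_comp hX hA hZ)) (hnonneg hZ0)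
    (hnonneg ((condExp_nonneg hZ0).trans_eq (h.ae_eq_condExp hX hA hZ).symm)) fun B hB => ?_
  rw [integral_ind_mul hA, integral_ind_mul hA, Measure.restrict_comm hA, h.setIntegral_eq hX hA hB]

theorem setIntegral_sub_mul_comp (h : IsCondMeanGiven P X A Z g) (hX : Measurable X)
    (hA : MeasurableSet A) (hZ : IntegrableOn Z A P) {m k : 𝓧 → ℝ} (hm : Measurable m)
    (hk : Measurable k) (hm_int : IntegrableOn (fun ω => m (X ω)) A P)
    (hmk : IntegrableOn (fun ω => (Z ω - m (X ω)) * k (X ω)) A P) :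
    ∫ ω in A, (Z ω - m (X ω)) * k (X ω) ∂P = ∫ ω in A, (g (X ω) - m (X ω)) * k (X ω) ∂P := by
  have hkX : StronglyMeasurable[m𝓧.comap X] fun ω => k (X ω) :=
    (hk.comp (comap_measurable X)).stronglyMeasurable
  have hmX : StronglyMeasurable[m𝓧.comap X] fun ω => m (X ω) :=
    (hm.comp (comap_measurable X)).stronglyMeasurable
  have hsub : (P.restrict A)[fun ω => Z ω - m (X ω) | m𝓧.comap X] =ᵐ[P.restrict A]
      fun ω => g (X ω) - m (X ω) := by
    filter_upwards [condExp_sub hZ hm_int (m𝓧.comap X), h.ae_eq_condExp hX hA hZ] with ω h₁ h₂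
    rw [h₂, ← congrFun (condExp_of_stronglyMeasurable hX.comap_le hmX hm_int) ω]
    exact h₁
  rw [← integral_condExp hX.comap_le]
  refine integral_congr_ae ?_
  filter_upwards [condExp_mul_of_stronglyMeasurable_right hkX hmk (hZ.sub hm_int), hsub]
    with ω h₁ h₂
  rw [← h₂]
  exact h₁

theorem integral_weight_mul_sub (h : IsCondMeanGiven P X A Z g) (hX : Measurable X)
    {B : Set Ω} (hA : MeasurableSet A) (hB : MeasurableSet B) (hZ : IntegrableOn Z A P)
    {m r : 𝓧 → ℝ} (hm : Measurable m) (hr : Measurable r)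
    (hm_int : IntegrableOn (fun ω => m (X ω)) A P)
    (hAB : WeightEquiv P X (fun ω => ind A ω * r (X ω)) (ind B))
    (hint : Integrable (fun ω => ind A ω * r (X ω) * (Z ω - m (X ω))) P) :
    ∫ ω, ind A ω * r (X ω) * (Z ω - m (X ω)) ∂P = ∫ ω in B, (g (X ω) - m (X ω)) ∂P := by
  have hcomm (f : Ω → ℝ) : (fun ω => ind A ω * r (X ω) * f ω) = fun ω =>
      ind A ω * (f ω * r (X ω)) := by
    ext ω
    ring
  rw [← integral_ind_mul hB, ← hAB.integral_mul_comp_eq hX (F := fun x => g x - m x) (h.1.sub hm)]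
  rw [hcomm, integrable_ind_mul_iff hA] at hint
  rw [hcomm, hcomm, integral_ind_mul hA, integral_ind_mul hA]
  exact h.setIntegral_sub_mul_comp hX hA hZ hm hr hm_int hint

end IsCondMeanGiven

section Treatment

theorem ind_evD (D1 D2 : Ω → ℝ) (d : ℝ × ℝ) (ω : Ω) :
    ind (evD D1 D2 d) ω = ind (evD2 D2 d.2) ω * ind {d.1} (D1 ω) := by
  by_cases h₁ : D1 ω = d.1 <;> by_cases h₂ : D2 ω = d.2 <;> simp [ind, evD, evD2, h₁, h₂]

variable [MeasurableSpace Ω] [MeasurableSpace 𝓧] {P : Measure Ω} {X : Ω → 𝓧} {D1 D2 : Ω → ℝ}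

theorem measurableSet_evD2 (hD2 : Measurable D2) (b : ℝ) : MeasurableSet (evD2 D2 b) :=
  measurableSet_eq_fun hD2 measurable_const

theorem measurableSet_evD (hD1 : Measurable D1) (hD2 : Measurable D2) (d : ℝ × ℝ) :
    MeasurableSet (evD D1 D2 d) :=
  (measurableSet_eq_fun hD1 measurable_const).inter (measurableSet_evD2 hD2 d.2)

variable [IsFiniteMeasure P]

theorem weightEquiv_ind_evD2_mul (hX : Measurable X) (hD1 : Measurable D1) (hD2 : Measurable D2)
    {d : ℝ × ℝ} {πc : 𝓧 → ℝ}
    (hc : IsCondMeanGiven P X (evD2 D2 d.2) (ind {ω | D1 ω = d.1}) πc) :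
    WeightEquiv P X (ind (evD D1 D2 d)) fun ω => ind (evD2 D2 d.2) ω * πc (X ω) := by
  rw [funext (ind_evD D1 D2 d)]
  exact hc.weightEquiv hX (measurableSet_evD2 hD2 d.2)
    (integrable_ind (measurableSet_eq_fun hD1 measurable_const)).integrableOn
    (.of_forall (ind_nonneg _))

theorem weightEquiv_ind_evD (hX : Measurable X) (hD1 : Measurable D1) (hD2 : Measurable D2)
    {d : ℝ × ℝ} {πc π2 : 𝓧 → ℝ} (hπc : ∀ x, 0 ≤ πc x)
    (hc : IsCondMeanGiven P X (evD2 D2 d.2) (ind {ω | D1 ω = d.1}) πc)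
    (h2 : IsCondMeanGiven P X univ (ind (evD2 D2 d.2)) π2) :
    WeightEquiv P X (ind (evD D1 D2 d)) fun ω => π2 (X ω) * πc (X ω) := by
  have h2' : WeightEquiv P X (ind (evD2 D2 d.2)) fun ω => π2 (X ω) := by
    simpa only [ind, indicator_univ, one_mul] using h2.weightEquiv hX MeasurableSet.univ
      (integrable_ind (measurableSet_evD2 hD2 d.2)).integrableOn (.of_forall (ind_nonneg _))
  exact (weightEquiv_ind_evD2_mul hX hD1 hD2 hc).trans (h2'.mul_comp hX hc.1 hπc)

theorem weightEquiv_ind_evD_mul_div (hX : Measurable X) (hD1 : Measurable D1) (hD2 : Measurable D2)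
    {d d' : ℝ × ℝ} {πc πc' π2 π0 : 𝓧 → ℝ} (hπc : ∀ x, 0 ≤ πc x) (hπc' : ∀ x, 0 < πc' x)
    (hπ2 : ∀ x, 0 ≤ π2 x) (hπ0 : ∀ x, 0 < π0 x)
    (hc : IsCondMeanGiven P X (evD2 D2 d.2) (ind {ω | D1 ω = d.1}) πc)
    (h2 : IsCondMeanGiven P X univ (ind (evD2 D2 d.2)) π2)
    (hc' : IsCondMeanGiven P X (evD2 D2 d'.2) (ind {ω | D1 ω = d'.1}) πc')
    (h0 : IsCondMeanGiven P X univ (ind (evD2 D2 d'.2)) π0) :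
    WeightEquiv P X
      (fun ω => ind (evD D1 D2 d') ω * (πc (X ω) * π2 (X ω) / (πc' (X ω) * π0 (X ω))))
      (ind (evD D1 D2 d)) := by
  have hratio := (weightEquiv_ind_evD hX hD1 hD2 (fun x => (hπc' x).le) hc' h0).mul_comp hX
    ((hc.1.mul h2.1).div (hc'.1.mul h0.1))
    fun x => div_nonneg (mul_nonneg (hπc x) (hπ2 x)) (mul_pos (hπc' x) (hπ0 x)).le
  refine (hratio.congr_right (.of_forall fun ω => ?_)).trans
    (weightEquiv_ind_evD hX hD1 hD2 hπc hc h2).symm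
  have h₁ := (hπc' (X ω)).ne'
  have h₂ := (hπ0 (X ω)).ne'
  simp only [Pi.mul_apply, Pi.div_apply]
  field_simp

end Treatment

section MissingData

/-- The data that a Hájek-weighted average may depend on besides `D₂` and `S`: the possibly missing
treatment `D₁`, the outcome change `ΔY` and the covariates. -/
def completeData (D1 Y0 Y2 : Ω → ℝ) (X : Ω → 𝓧) (ω : Ω) : (ℝ × ℝ) × 𝓧 :=
  ((D1 ω, Y2 ω - Y0 ω), X ω)

variable [MeasurableSpace Ω] [MeasurableSpace 𝓧] {P : Measure Ω} [IsFiniteMeasure P] {X : Ω → 𝓧}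
  {D1 D2 S Y0 Y2 : Ω → ℝ} {q : ℝ → 𝓧 → ℝ} {φ : 𝓧 → ℝ} {b : ℝ}

theorem measurable_completeData (hX : Measurable X) (hD1 : Measurable D1) (hY0 : Measurable Y0)
    (hY2 : Measurable Y2) : Measurable (completeData D1 Y0 Y2 X) :=
  (hD1.prodMk (hY2.sub hY0)).prodMk hX

theorem MAR.weightEquiv_mul (hMAR : MAR P X D1 D2 S Y0 Y2 q) (hX : Measurable X)
    (hD1 : Measurable D1) (hD2 : Measurable D2) (hS : Measurable S) (hY0 : Measurable Y0)
    (hY2 : Measurable Y2) (hS01 : ∀ ω, S ω ∈ Icc 0 1) (hb : b ∈ ({0, 1} : Set ℝ)) :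
    WeightEquiv P (completeData D1 Y0 Y2 X) (fun ω => ind (evD2 D2 b) ω * S ω)
      fun ω => ind (evD2 D2 b) ω * q b (X ω) := by
  have hA := measurableSet_evD2 hD2 b
  have hW : Measurable fun ω => (D1 ω, Y2 ω - Y0 ω) := hD1.prodMk (hY2.sub hY0)
  have hS_int : IntegrableOn S (evD2 D2 b) P :=
    .of_bound (measure_lt_top _ _) hS.aestronglyMeasurable 1
      (.of_forall fun ω => by simpa only [Real.norm_of_nonneg (hS01 ω).1] using (hS01 ω).2)
  have hSq := (hMAR.1 b hb).weightEquiv hX hA hS_int (.of_forall fun ω => (hS01 ω).1)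
  have hind (B : Set (ℝ × ℝ)) (C : Set 𝓧) (hB : MeasurableSet B) (hC : MeasurableSet C)
      (f : Ω → ℝ) :
      ∫ ω, ind (evD2 D2 b) ω * f ω * ind B (D1 ω, Y2 ω - Y0 ω) * ind C (X ω) ∂P =
        ∫ ω in (fun ω => (D1 ω, Y2 ω - Y0 ω)) ⁻¹' B ∩ X ⁻¹' C, ind (evD2 D2 b) ω * f ω ∂P := by
    rw [← integral_ind_mul ((hW hB).inter (hX hC))]
    exact integral_congr_ae (.of_forall fun ω => by
      simp only [ind, indicator, mem_preimage, mem_inter_iff]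
      split_ifs <;> simp_all)
  refine .prodMk_of_setIntegral_eq hW hX ((integrable_ind_mul_iff hA).2 hS_int)
    ((integrable_ind_mul_iff hA).2 ((hMAR.1 b hb).integrableOn_comp hX hA hS_int))
    hSq.nonneg_left hSq.nonneg_right fun B C hB hC => ?_
  rw [← hind B C hB hC, ← hind B C hB hC]
  exact hMAR.2.2 b hb (ind B) (measurable_ind hB) ⟨1, abs_ind_le_one B⟩ (ind C) (measurable_ind hC)
    ⟨1, abs_ind_le_one C⟩

theorem MAR.weightEquiv_mul_inv (hMAR : MAR P X D1 D2 S Y0 Y2 q) (hX : Measurable X)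
    (hD1 : Measurable D1) (hD2 : Measurable D2) (hS : Measurable S) (hY0 : Measurable Y0)
    (hY2 : Measurable Y2) (hS01 : ∀ ω, S ω ∈ Icc 0 1) (hb : b ∈ ({0, 1} : Set ℝ))
    (hφ : Measurable φ) (hφ0 : ∀ x, 0 ≤ φ x) (hφq : ∀ᵐ ω ∂P, φ (X ω) = q b (X ω)) :
    WeightEquiv P (completeData D1 Y0 Y2 X) (fun ω => ind (evD2 D2 b) ω * S ω * (φ (X ω))⁻¹)
      (ind (evD2 D2 b)) := by
  refine ((hMAR.weightEquiv_mul hX hD1 hD2 hS hY0 hY2 hS01 hb).mul_comp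
    (measurable_completeData hX hD1 hY0 hY2) (hφ.inv.comp measurable_snd)
    fun p => inv_nonneg.2 (hφ0 p.2)).congr_right ?_
  filter_upwards [hφq, hMAR.2.1 b hb] with ω hω hq
  have hq0 := hq.1.ne'
  simp only [completeData, Function.comp_apply, Pi.inv_apply, hω]
  field_simp

end MissingData

section HajekWeights

variable [MeasurableSpace Ω] [MeasurableSpace 𝓧] {P : Measure Ω} {X : Ω → 𝓧}
  {D1 D2 S Y0 Y2 : Ω → ℝ} {φ2 φ0 πc πc' π2 π0 : 𝓧 → ℝ} {d : ℝ × ℝ}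

theorem weightEquiv_n1 (hW : Measurable (completeData D1 Y0 Y2 X))
    (hipw : WeightEquiv P (completeData D1 Y0 Y2 X)
      (fun ω => ind (evD2 D2 d.2) ω * S ω * (φ2 (X ω))⁻¹) (ind (evD2 D2 d.2))) :
    WeightEquiv P (completeData D1 Y0 Y2 X) (n1 X D1 D2 S φ2 d) (ind (evD D1 D2 d)) := by
  convert hipw.mul_comp hW (f := fun p => ind {d.1} p.1.1)
    ((measurable_ind (measurableSet_singleton _)).comp measurable_fst.fst)
    (fun p => ind_nonneg _ _) using 2 with ω ω
  · simp only [n1, ind_evD, completeData]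
    ring
  · exact ind_evD D1 D2 d ω

theorem weightEquiv_n2 (hW : Measurable (completeData D1 Y0 Y2 X))
    (hipw : WeightEquiv P (completeData D1 Y0 Y2 X)
      (fun ω => ind (evD2 D2 0) ω * S ω * (φ0 (X ω))⁻¹) (ind (evD2 D2 0)))
    (hπcm : Measurable πc) (hπc'm : Measurable πc') (hπ2m : Measurable π2) (hπ0m : Measurable π0)
    (hπc : ∀ x, 0 ≤ πc x) (hπc' : ∀ x, 0 ≤ πc' x) (hπ2 : ∀ x, 0 ≤ π2 x) (hπ0 : ∀ x, 0 ≤ π0 x) :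
    WeightEquiv P (completeData D1 Y0 Y2 X) (n2 X D1 D2 S φ0 πc πc' π2 π0) fun ω =>
      ind (evD D1 D2 (0, 0)) ω * (πc (X ω) * π2 (X ω) / (πc' (X ω) * π0 (X ω))) := by
  have hr : Measurable fun x => πc x * π2 x / (πc' x * π0 x) := (hπcm.mul hπ2m).div (hπc'm.mul hπ0m)
  convert hipw.mul_comp hW
    (f := fun p => ind {0} p.1.1 * (πc p.2 * π2 p.2 / (πc' p.2 * π0 p.2)))
    (((measurable_ind (measurableSet_singleton _)).comp measurable_fst.fst).mul
      (hr.comp measurable_snd))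
    (fun p => mul_nonneg (ind_nonneg _ _) (div_nonneg (mul_nonneg (hπc _) (hπ2 _))
      (mul_nonneg (hπc' _) (hπ0 _)))) using 2 with ω ω
  · simp only [n2, ind_evD, completeData]
    ring
  · simp only [ind_evD, completeData]
    ring

theorem weightEquiv_n4_n3 (hW : Measurable (completeData D1 Y0 Y2 X))
    (hipw : WeightEquiv P (completeData D1 Y0 Y2 X)
      (fun ω => ind (evD2 D2 d.2) ω * S ω * (φ2 (X ω))⁻¹) (ind (evD2 D2 d.2)))
    (hπcm : Measurable πc) (hπc : ∀ x, 0 ≤ πc x) :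
    WeightEquiv P (completeData D1 Y0 Y2 X) (n4 X D2 S φ2 πc d.2) (n3 X D2 πc d.2) := by
  convert hipw.mul_comp hW (f := fun p => πc p.2) (hπcm.comp measurable_snd) (fun p => hπc p.2)
    using 2 with ω ω
  · simp only [n4, completeData]
    ring
  · simp only [n3, completeData]
    ring

theorem integral_hajek_augmentation_eq_zero [IsFiniteMeasure P] (hX : Measurable X)
    (hD1 : Measurable D1) (hD2 : Measurable D2) (hW : Measurable (completeData D1 Y0 Y2 X))
    (hipw : WeightEquiv P (completeData D1 Y0 Y2 X)
      (fun ω => ind (evD2 D2 d.2) ω * S ω * (φ2 (X ω))⁻¹) (ind (evD2 D2 d.2)))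
    (hπc : IsCondMeanGiven P X (evD2 D2 d.2) (ind {ω | D1 ω = d.1}) πc)
    (hπc_nonneg : ∀ x, 0 ≤ πc x) {f : 𝓧 → ℝ} (hf : Measurable f)
    (hf_int : Integrable (fun ω => f (X ω)) P) :
    ∫ ω, (n3 X D2 πc d.2 ω / ∫ ω', n3 X D2 πc d.2 ω' ∂P
        - n4 X D2 S φ2 πc d.2 ω / ∫ ω', n4 X D2 S φ2 πc d.2 ω' ∂P) * f (X ω) ∂P = 0 := by
  have hn4 := weightEquiv_n4_n3 hW hipw hπc.1 hπc_nonneg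
  have hn3_int : Integrable (fun ω => n3 X D2 πc d.2 ω * f (X ω)) P := by
    have hpath := (weightEquiv_ind_evD2_mul hX hD1 hD2 hπc).integrable_mul_comp_iff hX hf
    simpa only [n3, mul_comm (πc _)] using
      hpath.1 ((integrable_ind_mul_iff (measurableSet_evD hD1 hD2 d)).2 hf_int.integrableOn)
  have haug := (hn4.symm.trans hn4).integral_hajek_sub hn4 hW (F := fun p => f p.2)
    (hf.comp measurable_snd) rfl hn3_int hn3_int
  rwa [sub_self, mul_zero] at haug

end HajekWeights

section Identification

variable [MeasurableSpace Ω] [MeasurableSpace 𝓧] {P : Measure Ω} [IsFiniteMeasure P] {X : Ω → 𝓧}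
  {D1 D2 Y0 Y2 : Ω → ℝ} {Y0p Y2p : ℝ × ℝ → Ω → ℝ} {d : ℝ × ℝ}

theorem DID.setIntegral_sub_trend (hDID : DID P X D1 D2 Y0p Y2p d) (hX : Measurable X)
    (hD1 : Measurable D1) (hD2 : Measurable D2) (hY0i : Integrable Y0 P) (hY2i : Integrable Y2 P)
    (hY0p : Integrable (Y0p (0, 0)) P) (hY2p : Integrable (Y2p (0, 0)) P)
    (hcons0 : ∀ ω, Y0 ω = Y0p (D1 ω, D2 ω) ω) (hcons2 : ∀ ω, Y2 ω = Y2p (D1 ω, D2 ω) ω)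
    {g : 𝓧 → ℝ} (hg : IsCondMeanGiven P X univ (fun ω => Y2p (0, 0) ω - Y0p (0, 0) ω) g) :
    ∫ ω in evD D1 D2 d, (Y2 ω - Y0 ω - g (X ω)) ∂P =
      ∫ ω in evD D1 D2 d, (Y2p d ω - Y2p (0, 0) ω) ∂P := by
  obtain ⟨hanticip, tr, htr, htrd⟩ := hDID
  have hA := measurableSet_evD hD1 hD2 d
  have hT_int : Integrable (fun ω => Y2p (0, 0) ω - Y0p (0, 0) ω) P := hY2p.sub hY0p
  have hg_int : Integrable (fun ω => g (X ω)) P :=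
    integrableOn_univ.1 (hg.integrableOn_comp hX .univ hT_int.integrableOn)
  have hgtr : (fun ω => g (X ω)) =ᵐ[P] fun ω => tr (X ω) := by
    simpa only [Measure.restrict_univ] using hg.ae_eq htr hX .univ hT_int.integrableOn
  have htrend : ∫ ω in evD D1 D2 d, g (X ω) ∂P =
      ∫ ω in evD D1 D2 d, Y2p (0, 0) ω ∂P - ∫ ω in evD D1 D2 d, Y0p (0, 0) ω ∂P := by
    rw [← integral_sub hY2p.integrableOn hY0p.integrableOn,
      integral_congr_ae (ae_restrict_of_ae hgtr)]
    simpa only [preimage_univ, Measure.restrict_univ] using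
      (htrd.setIntegral_eq hX hA MeasurableSet.univ).symm
  have hY0 : ∫ ω in evD D1 D2 d, Y0 ω ∂P = ∫ ω in evD D1 D2 d, Y0p (0, 0) ω ∂P := by
    have hobs : ∫ ω in evD D1 D2 d, Y0 ω ∂P = ∫ ω in evD D1 D2 d, Y0p d ω ∂P :=
      setIntegral_congr_fun hA fun ω hω => by rw [hcons0, hω.1, hω.2]
    rw [hobs, ← integral_ind_mul hA, ← integral_ind_mul hA]
    simpa only [mul_one] using
      hanticip (fun _ => 1) measurable_const ⟨1, fun _ => abs_one.le⟩
  have hY2 : ∫ ω in evD D1 D2 d, (Y2p d ω - Y2p (0, 0) ω) ∂P =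
      ∫ ω in evD D1 D2 d, (Y2 ω - Y2p (0, 0) ω) ∂P :=
    setIntegral_congr_fun hA fun ω hω => by
      simp only [hcons2, hω.1, hω.2]
  rw [hY2,
    integral_sub (f := fun ω => Y2 ω - Y0 ω) (hY2i.sub hY0i).integrableOn hg_int.integrableOn,
    integral_sub hY2i.integrableOn hY0i.integrableOn,
    integral_sub hY2i.integrableOn hY2p.integrableOn, htrend, hY0]
  ring

theorem setIntegral_sub_integral_reweight (hDID : DID P X D1 D2 Y0p Y2p d)
    (hDID' : DID P X D1 D2 Y0p Y2p (0, 0)) (hX : Measurable X) (hD1 : Measurable D1)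
    (hD2 : Measurable D2) (hY0i : Integrable Y0 P) (hY2i : Integrable Y2 P)
    (hY0p : Integrable (Y0p (0, 0)) P) (hY2p : Integrable (Y2p (0, 0)) P)
    (hcons0 : ∀ ω, Y0 ω = Y0p (D1 ω, D2 ω) ω) (hcons2 : ∀ ω, Y2 ω = Y2p (D1 ω, D2 ω) ω)
    {m r : 𝓧 → ℝ} (hm : Measurable m) (hr : Measurable r)
    (hm_int : Integrable (fun ω => m (X ω)) P)
    (hreweight : WeightEquiv P X (fun ω => ind (evD D1 D2 (0, 0)) ω * r (X ω)) (ind (evD D1 D2 d)))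
    (hint : Integrable
      (fun ω => ind (evD D1 D2 (0, 0)) ω * r (X ω) * (Y2 ω - Y0 ω - m (X ω))) P) :
    ∫ ω in evD D1 D2 d, (Y2 ω - Y0 ω - m (X ω)) ∂P -
        ∫ ω, ind (evD D1 D2 (0, 0)) ω * r (X ω) * (Y2 ω - Y0 ω - m (X ω)) ∂P =
      ∫ ω in evD D1 D2 d, (Y2p d ω - Y2p (0, 0) ω) ∂P := by
  obtain ⟨-, g, hg, hg'⟩ := hDID'
  have hA := measurableSet_evD hD1 hD2 (0, 0)
  have hg_int : Integrable (fun ω => g (X ω)) P :=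
    integrableOn_univ.1 (hg.integrableOn_comp hX .univ (hY2p.sub hY0p).integrableOn)
  have hgΔ : IsCondMeanGiven P X (evD D1 D2 (0, 0)) (fun ω => Y2 ω - Y0 ω) g :=
    hg'.congr fun ω hω => by simp only [hcons0, hcons2, hω.1, hω.2]
  rw [← hDID.setIntegral_sub_trend hX hD1 hD2 hY0i hY2i hY0p hY2p hcons0 hcons2 hg,
    hgΔ.integral_weight_mul_sub hX hA (measurableSet_evD hD1 hD2 d) (hY2i.sub hY0i).integrableOn
      hm hr hm_int.integrableOn hreweight hint,
    ← integral_sub (f := fun ω => Y2 ω - Y0 ω - m (X ω)) (g := fun ω => g (X ω) - m (X ω))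
      ((hY2i.sub hY0i).sub hm_int).integrableOn (hg_int.sub hm_int).integrableOn]
  exact integral_congr_ae (.of_forall fun ω => by simp)

end Identification

theorem statement_5_general [MeasurableSpace Ω] [MeasurableSpace 𝓧] {P : Measure Ω}
    [IsFiniteMeasure P] {X : Ω → 𝓧} (hX : Measurable X) {Y0 Y2 D1 D2 S : Ω → ℝ}
    (hY0 : Measurable Y0) (hY2 : Measurable Y2) (hD1 : Measurable D1) (hD2 : Measurable D2)
    (hS : Measurable S) (hY0i : Integrable Y0 P) (hY2i : Integrable Y2 P)
    (hS01 : ∀ ω, S ω ∈ Icc 0 1) {Y0p Y2p : ℝ × ℝ → Ω → ℝ}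
    (hY0p : Integrable (Y0p (0, 0)) P) (hY2p : Integrable (Y2p (0, 0)) P)
    (hcons0 : ∀ ω, Y0 ω = Y0p (D1 ω, D2 ω) ω) (hcons2 : ∀ ω, Y2 ω = Y2p (D1 ω, D2 ω) ω)
    {d : ℝ × ℝ} (hd : d.2 ∈ ({0, 1} : Set ℝ))
    (hDID : DID P X D1 D2 Y0p Y2p d) (hDID' : DID P X D1 D2 Y0p Y2p (0, 0))
    {q : ℝ → 𝓧 → ℝ} (hMAR : MAR P X D1 D2 S Y0 Y2 q)
    {μd μd' πc πc' π2 π0 φ2 φ0 : 𝓧 → ℝ} (hμd : Measurable μd) (hμd' : Measurable μd')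
    (hμd_int : Integrable (fun ω => μd (X ω)) P) (hμd'_int : Integrable (fun ω => μd' (X ω)) P)
    (hπc_nonneg : ∀ x, 0 ≤ πc x) (hπc'_pos : ∀ x, 0 < πc' x) (hπ2_nonneg : ∀ x, 0 ≤ π2 x)
    (hπ0_pos : ∀ x, 0 < π0 x) (hφ2 : Measurable φ2) (hφ0 : Measurable φ0)
    (hφ2_nonneg : ∀ x, 0 ≤ φ2 x) (hφ0_nonneg : ∀ x, 0 ≤ φ0 x)
    (hn1 : ∫ ω, n1 X D1 D2 S φ2 d ω ∂P ≠ 0)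
    (hint : Integrable (fun ω =>
        (n1 X D1 D2 S φ2 d ω / ∫ ω', n1 X D1 D2 S φ2 d ω' ∂P
          - n2 X D1 D2 S φ0 πc πc' π2 π0 ω / ∫ ω', n2 X D1 D2 S φ0 πc πc' π2 π0 ω' ∂P)
        * (Y2 ω - Y0 ω - μd' (X ω))) P)
    (hφ2q : ∀ᵐ ω ∂P, φ2 (X ω) = q d.2 (X ω)) (hφ0q : ∀ᵐ ω ∂P, φ0 (X ω) = q 0 (X ω))
    (hπc : IsCondMeanGiven P X (evD2 D2 d.2) (ind {ω | D1 ω = d.1}) πc)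
    (hπ2 : IsCondMeanGiven P X univ (ind (evD2 D2 d.2)) π2)
    (hπc' : IsCondMeanGiven P X (evD2 D2 0) (ind {ω | D1 ω = 0}) πc')
    (hπ0 : IsCondMeanGiven P X univ (ind (evD2 D2 0)) π0) :
    tauR P X D1 D2 S Y0 Y2 d μd μd' πc πc' π2 π0 φ2 φ0 = tau P D1 D2 Y2p d := by
  have hA := measurableSet_evD hD1 hD2 d
  have hW := measurable_completeData hX hD1 hY0 hY2
  have hipw2 := hMAR.weightEquiv_mul_inv hX hD1 hD2 hS hY0 hY2 hS01 hd hφ2 hφ2_nonneg hφ2q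
  have hipw0 := hMAR.weightEquiv_mul_inv hX hD1 hD2 hS hY0 hY2 hS01 (.inl rfl) hφ0 hφ0_nonneg hφ0q
  have hreweight := weightEquiv_ind_evD_mul_div (d' := (0, 0)) hX hD1 hD2 hπc_nonneg hπc'_pos
    hπ2_nonneg hπ0_pos hπc hπ2 hπc' hπ0
  have hw1 := weightEquiv_n1 hW hipw2
  have hw2 := weightEquiv_n2 hW hipw0 hπc.1 hπc'.1 hπ2.1 hπ0.1 hπc_nonneg
    (fun x => (hπc'_pos x).le) hπ2_nonneg fun x => (hπ0_pos x).le
  have hmass := hreweight.integral_eq hX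
  have hmass_ne : ∫ ω, ind (evD D1 D2 d) ω ∂P ≠ 0 := hw1.integral_eq hW ▸ hn1
  have hP : ∫ ω, ind (evD D1 D2 d) ω ∂P = (P (evD D1 D2 d)).toReal := integral_indicator_one hA
  have hF : Measurable fun p : (ℝ × ℝ) × 𝓧 => p.1.2 - μd' p.2 :=
    measurable_fst.snd.sub (hμd'.comp measurable_snd)
  have htreated : Integrable (fun ω => ind (evD D1 D2 d) ω * (Y2 ω - Y0 ω - μd' (X ω))) P :=
    (integrable_ind_mul_iff hA).2 ((hY2i.sub hY0i).sub hμd'_int).integrableOn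
  have huntreated := hw1.integrable_mul_comp_of_hajek_sub hw2 hW hF (hmass.trans_ne hmass_ne)
    htreated hint
  have hdid := hw1.integral_hajek_sub hw2 hW hF hmass.symm htreated huntreated
  have haug := integral_hajek_augmentation_eq_zero hX hD1 hD2 hW hipw2 hπc hπc_nonneg
    (hμd.sub hμd') (hμd_int.sub hμd'_int)
  have hcontrast := setIntegral_sub_integral_reweight hDID hDID' hX hD1 hD2 hY0i hY2i hY0p hY2p
    hcons0 hcons2 hμd' ((hπc.1.mul hπ2.1).div (hπc'.1.mul hπ0.1)) hμd'_int hreweight huntreated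
  rw [tau, ← hcontrast, ← hP, ← integral_ind_mul hA]
  exact (congrArg₂ (· + ·) hdid haug).trans (add_zero _)

/-- Theorem 1, case 2: the robust estimand identifies the PDATT when the missing-data
and propensity-score models are correctly specified (the outcome models are arbitrary). -/
theorem statement_5
    [MeasurableSpace Ω] [m𝓧 : MeasurableSpace 𝓧]
    (P : Measure Ω) [IsProbabilityMeasure P]
    (X : Ω → 𝓧) (hX : Measurable X)
    (Y0 Y2 D1 D2 S : Ω → ℝ)
    (hY0 : Measurable Y0) (hY2 : Measurable Y2)
    (hD1 : Measurable D1) (hD2 : Measurable D2) (hS : Measurable S)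
    (hY0i : Integrable Y0 P) (hY2i : Integrable Y2 P)
    (hD1v : ∀ ω, D1 ω = 0 ∨ D1 ω = 1) (hD2v : ∀ ω, D2 ω = 0 ∨ D2 ω = 1)
    (hSv : ∀ ω, S ω = 0 ∨ S ω = 1)
    (Y0p Y2p : ℝ × ℝ → Ω → ℝ)
    (hY0p : ∀ e ∈ allPaths, Measurable (Y0p e) ∧ Integrable (Y0p e) P)
    (hY2p : ∀ e ∈ allPaths, Measurable (Y2p e) ∧ Integrable (Y2p e) P)
    (hcons0 : ∀ ω, Y0 ω = Y0p (D1 ω, D2 ω) ω)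
    (hcons2 : ∀ ω, Y2 ω = Y2p (D1 ω, D2 ω) ω)
    (d : ℝ × ℝ) (hd : d ∈ threePaths)
    (hDIDd : DID P X D1 D2 Y0p Y2p d) (hDIDd' : DID P X D1 D2 Y0p Y2p (0, 0))
    (q : ℝ → 𝓧 → ℝ) (hMAR : MAR P X D1 D2 S Y0 Y2 q)
    (pd pd' : 𝓧 → ℝ)
    (hpd : IsCondMeanGiven P X Set.univ (ind (evD D1 D2 d)) pd)
    (hpd' : IsCondMeanGiven P X Set.univ (ind (evD D1 D2 (0, 0))) pd')
    (hpdpos : ∀ᵐ ω ∂P, 0 < pd (X ω)) (hpd'pos : ∀ᵐ ω ∂P, 0 < pd' (X ω))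
    (μd μd' πc πc' π2 π0 φ2 φ0 : 𝓧 → ℝ)
    (hμdm : Measurable μd) (hμd'm : Measurable μd')
    (hμdi : Integrable (fun ω => μd (X ω)) P) (hμd'i : Integrable (fun ω => μd' (X ω)) P)
    (hπcm : Measurable πc) (hπc'm : Measurable πc')
    (hπ2m : Measurable π2) (hπ0m : Measurable π0)
    (hπcv : ∀ x, 0 < πc x ∧ πc x < 1) (hπc'v : ∀ x, 0 < πc' x ∧ πc' x < 1)
    (hπ2v : ∀ x, 0 < π2 x ∧ π2 x < 1) (hπ0v : ∀ x, 0 < π0 x ∧ π0 x < 1)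
    (hφ2m : Measurable φ2) (hφ0m : Measurable φ0)
    (hφ2v : ∀ x, 0 < φ2 x ∧ φ2 x ≤ 1) (hφ0v : ∀ x, 0 < φ0 x ∧ φ0 x ≤ 1)
    (hn1i : Integrable (n1 X D1 D2 S φ2 d) P)
    (hn1pos : 0 < ∫ ω, n1 X D1 D2 S φ2 d ω ∂P)
    (hn2i : Integrable (n2 X D1 D2 S φ0 πc πc' π2 π0) P)
    (hn2pos : 0 < ∫ ω, n2 X D1 D2 S φ0 πc πc' π2 π0 ω ∂P)
    (hn3i : Integrable (n3 X D2 πc d.2) P)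
    (hn3pos : 0 < ∫ ω, n3 X D2 πc d.2 ω ∂P)
    (hn4i : Integrable (n4 X D2 S φ2 πc d.2) P)
    (hn4pos : 0 < ∫ ω, n4 X D2 S φ2 πc d.2 ω ∂P)
    (hint1 : Integrable (fun ω =>
        (n1 X D1 D2 S φ2 d ω / ∫ ω', n1 X D1 D2 S φ2 d ω' ∂P
          - n2 X D1 D2 S φ0 πc πc' π2 π0 ω / ∫ ω', n2 X D1 D2 S φ0 πc πc' π2 π0 ω' ∂P)
        * (Y2 ω - Y0 ω - μd' (X ω))) P)
    (hint2 : Integrable (fun ω =>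
        (n3 X D2 πc d.2 ω / ∫ ω', n3 X D2 πc d.2 ω' ∂P
          - n4 X D2 S φ2 πc d.2 ω / ∫ ω', n4 X D2 S φ2 πc d.2 ω' ∂P)
        * (μd (X ω) - μd' (X ω))) P)
    (hφ2_corr : ∀ᵐ ω ∂P, φ2 (X ω) = q d.2 (X ω))
    (hφ0_corr : ∀ᵐ ω ∂P, φ0 (X ω) = q 0 (X ω))
    (hπc_corr : IsCondMeanGiven P X (evD2 D2 d.2) (ind {ω | D1 ω = d.1}) πc)
    (hπ2_corr : IsCondMeanGiven P X Set.univ (ind (evD2 D2 d.2)) π2)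
    (hπc'_corr : IsCondMeanGiven P X (evD2 D2 0) (ind {ω | D1 ω = 0}) πc')
    (hπ0_corr : IsCondMeanGiven P X Set.univ (ind (evD2 D2 0)) π0)
    :
    tauR P X D1 D2 S Y0 Y2 d μd μd' πc πc' π2 π0 φ2 φ0 = tau P D1 D2 Y2p d := by
  have hd2 : d.2 ∈ ({0, 1} : Set ℝ) := by rcases hd with rfl | rfl | rfl <;> simp
  have h00 : ((0, 0) : ℝ × ℝ) ∈ allPaths := .inl rfl
  exact statement_5_general hX hY0 hY2 hD1 hD2 hS hY0i hY2i
    (fun ω => by rcases hSv ω with h | h <;> simp [h]) (hY0p _ h00).2 (hY2p _ h00).2 hcons0 hcons2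
    hd2 hDIDd hDIDd' hMAR hμdm hμd'm hμdi hμd'i (fun x => (hπcv x).1.le) (fun x => (hπc'v x).1)
    (fun x => (hπ2v x).1.le) (fun x => (hπ0v x).1) hφ2m hφ0m (fun x => (hφ2v x).1.le)
    (fun x => (hφ0v x).1.le) hn1pos.ne' hint1 hφ2_corr hφ0_corr hπc_corr hπ2_corr hπc'_corr hπ0_corr

end DIDMissing
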